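/- arXiv:2502.07041 — 2 statements merged into one kernel-verified Lean document; each statement's English description precedes it below -/
import Mathlib

section
/- Let 1 < p < q < 2. There exists a constant C > 0 such that for every n ∈ ℕ and every finite family f_1, …, f_n ∈ X_p of measurable functions on [0,1], one has (Σ_{i=1}^n ‖f_i‖_{L^p[0,1]}^q)^{1/q} ≤ C · max_{ε ∈ {-1,1}^n} ‖Σ_{i=1}^n ε_i f_i‖_{X_p}. (That is, the inclusion X_p ⊂ L^p is (q,1)-absolutely summing.) -/
/-!
Write `B` for the supremum of the `X_p` norms of the signed sums. At a point `s` where at least `k`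
of the functions satisfy `|f i s| ^ p > lam`, at least a proportion `2 ^ (-k)` of all sign choices
makes the signed sum larger than `k * lam ^ (1 / p)` (`two_pow_le_card_signs`). Hence a single choice
of signs does so on a set of measure at least `2 ^ (-k) * m`, where `m` is the measure of the set of
such points (`exists_signs_measure_ge`). The weight `W_p` is logarithmic, so the factor `2 ^ (-k)`
only costs a power of `k`: the weak-type bound (`mul_Wp_le`) at this one level gives
`m ≤ exp (2 - (k * lam / B ^ p) ^ (1 / (p - 1)))` (`level_measure_le`). No choice of signs has to be
good at several levels at once, since the measures `m`, and not the norms, are then integrated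
over `lam`.

Integrating over `lam` and summing over `k ≤ #A`, the layer-cake formula gives
`∑ i ∈ A, ‖f i‖_p ^ p ≤ c * B ^ p * ∑ k ≤ #A, 1 / k` for every set `A` of indices
(`sum_lintegral_le`). The harmonic sum is only a logarithmic loss, which is absorbed by passing from
the exponent `p` to `q > p` (`exists_sum_rpow_bound`).
-/

open MeasureTheory
open scoped ENNReal

/-- Lebesgue measure restricted to `[0,1]`. -/
noncomputable def mu01 : Measure ℝ := volume.restrict (Set.Icc 0 1)

/-- The weight `W_p(t) = (log(e/t))^{1-p}` for `t ∈ (0,1]`, `W_p(0)=0`. -/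
noncomputable def Wp (p t : ℝ) : ℝ :=
  if t = 0 then 0 else Real.log (Real.exp 1 / t) ^ (1 - p)

/-- The norm of the Lorentz space `X_p` on `[0,1]`:
`‖f‖_{X_p} = (∫_0^∞ W_p(μ{s ∈ [0,1] : |f s|^p > λ}) dλ)^{1/p}`. -/
noncomputable def XpNorm (p : ℝ) (f : ℝ → ℝ) : ℝ≥0∞ :=
  (∫⁻ lam in Set.Ioi (0 : ℝ),
      ENNReal.ofReal
        (Wp p (volume {s : ℝ | s ∈ Set.Icc (0 : ℝ) 1 ∧ lam < |f s| ^ p}).toReal)) ^ (1 / p)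

/-- Luxemburg norm of the exponential Orlicz space `Exp L^α` on `[0,1]`. -/
noncomputable def expLNorm (α : ℝ) (f : ℝ → ℝ) : ℝ≥0∞ :=
  ⨅ (lam : ℝ) (_ : 0 < lam ∧
      ∫⁻ t, ENNReal.ofReal (Real.exp ((|f t| / lam) ^ α) - 1) ∂mu01 ≤ 1),
    ENNReal.ofReal lam

/-- Weak `ℓ^q` quasinorm of a finite family of reals. -/
noncomputable def weakLq (q : ℝ) {n : ℕ} (a : Fin n → ℝ) : ℝ :=
  ⨆ t : Set.Ioi (0 : ℝ), t.1 * (Nat.card {k : Fin n // t.1 < |a k|} : ℝ) ^ (1 / q)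

/-- Weak `ℓ^q` quasinorm of a sequence with values in `[0,∞]`, cardinalities
taken via the counting measure on `ℕ`. -/
noncomputable def weakLqSeq (q : ℝ) (a : ℕ → ℝ≥0∞) : ℝ≥0∞ :=
  ⨆ t : Set.Ioi (0 : ℝ),
    ENNReal.ofReal t.1 * Measure.count {k : ℕ | ENNReal.ofReal t.1 < a k} ^ (1 / q)

/-- Peetre `K`-functional for the couple `(L^1[0,1], L^∞[0,1])`. -/
noncomputable def Kfun (τ : ℝ) (f : ℝ → ℝ) : ℝ≥0∞ :=
  ⨅ (g : ℝ → ℝ) (h : ℝ → ℝ) (_ : f = g + h),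
    eLpNorm g 1 mu01 + ENNReal.ofReal τ * eLpNorm h ⊤ mu01

/-- The Rademacher functions `r_k(t) = sgn(sin(2^k π t))`. -/
noncomputable def rademacher (k : ℕ) (t : ℝ) : ℝ :=
  Real.sign (Real.sin (2 ^ k * Real.pi * t))

/-- Marcinkiewicz space norm `‖f‖_{M_φ} = sup_{0<t≤1} (φ(t)/t) K(t,f;L^1,L^∞)`. -/
noncomputable def MNorm (φ : ℝ → ℝ) (f : ℝ → ℝ) : ℝ≥0∞ :=
  ⨆ t : {t : ℝ // 0 < t ∧ t ≤ 1}, ENNReal.ofReal (φ t.1 / t.1) * Kfun t.1 f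

/-! ### Counting signs -/

/-- Among the `2 ^ n` sign choices, at least `2 ^ (n - |S|)` give `|∑ ± x i| ≥ ∑ i ∈ S, |x i|`:
the signs off `S` are arbitrary, and those on `S` are chosen to make the partial sum over `S` equal
to `∑ i ∈ S, |x i|` in absolute value and of the same sign as the partial sum `R` off `S`. A sign
choice is encoded by the set `T` of indices with sign `+1`. -/
lemma two_pow_le_card_signs {n : ℕ} (x : Fin n → ℝ) (S : Finset (Fin n)) :
    2 ^ (n - S.card) ≤ (Finset.univ.filter fun T : Finset (Fin n) =>
      ∑ i ∈ S, |x i| ≤ |∑ i, (if i ∈ T then (1 : ℝ) else -1) * x i|).card := by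
  classical
  set R : Finset (Fin n) → ℝ := fun U => ∑ i ∈ Sᶜ, (if i ∈ U then (1 : ℝ) else -1) * x i
  let g : Finset (Fin n) → Finset (Fin n) := fun U =>
    U ∪ S.filter (fun i => if 0 ≤ R U then 0 ≤ x i else x i < 0)
  have hcard : 2 ^ (n - S.card) = (Sᶜ).powerset.card := by
    rw [Finset.card_powerset, Finset.card_compl, Fintype.card_fin]
  rw [hcard]
  refine Finset.card_le_card_of_injOn g ?_ ?_
  · intro U hU
    have hU' : U ⊆ Sᶜ := Finset.mem_powerset.mp hU
    simp only [Finset.coe_filter, Finset.mem_univ, true_and, Set.mem_ofPred_eq]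
    rw [← Finset.sum_add_sum_compl S]
    have h1 : ∑ i ∈ Sᶜ, (if i ∈ g U then (1 : ℝ) else -1) * x i = R U := by
      refine Finset.sum_congr rfl fun i hi => ?_
      have : i ∉ S := by simpa using hi
      simp [g, this]
    have h2 : ∀ i ∈ S, i ∈ g U ↔ (if 0 ≤ R U then 0 ≤ x i else x i < 0) := by
      intro i hi
      have : i ∉ U := fun h => by simpa [hi] using hU' h
      simp [g, this, hi]
    rw [h1]
    by_cases hR : 0 ≤ R U
    · have h3 : ∑ i ∈ S, (if i ∈ g U then (1 : ℝ) else -1) * x i = ∑ i ∈ S, |x i| := by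
        refine Finset.sum_congr rfl fun i hi => ?_
        simp only [h2 i hi, hR, if_true]
        split_ifs with h
        · rw [abs_of_nonneg h, one_mul]
        · rw [abs_of_neg (not_le.mp h), neg_one_mul]
      rw [h3]
      exact le_trans (by linarith) (le_abs_self _)
    · have h3 : ∑ i ∈ S, (if i ∈ g U then (1 : ℝ) else -1) * x i = - ∑ i ∈ S, |x i| := by
        rw [← Finset.sum_neg_distrib]
        refine Finset.sum_congr rfl fun i hi => ?_
        simp only [h2 i hi, hR, if_false]
        split_ifs with h
        · rw [abs_of_neg h, one_mul, neg_neg]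
        · rw [abs_of_nonneg (not_lt.mp h), neg_one_mul]
      rw [h3]
      exact le_trans (by linarith) (neg_le_abs _)
  · intro U hU V hV h
    have key : ∀ U ⊆ Sᶜ, g U ∩ Sᶜ = U := by
      intro U hU
      ext i
      simp only [g, Finset.mem_inter, Finset.mem_union, Finset.mem_filter, Finset.mem_compl]
      refine ⟨by tauto, fun h => ⟨Or.inl h, by simpa using hU h⟩⟩
    rw [← key U (Finset.mem_powerset.mp hU), ← key V (Finset.mem_powerset.mp hV), h]

/-! ### Slicing by multiplicity -/

/-- The count `#{i ∈ A | P i}` is the sum over `1 ≤ k ≤ #A` of the indicators of `k ≤ count`. -/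
lemma card_eq_sum_indicator {ι : Type*} (A : Finset ι) (P : ι → Prop) [DecidablePred P] :
    ((A.filter P).card : ℝ≥0∞) =
      ∑ k ∈ Finset.Icc 1 A.card, if k ≤ (A.filter P).card then (1 : ℝ≥0∞) else 0 := by
  rw [← Finset.sum_filter, Finset.sum_const, nsmul_one]
  congr 1
  have : (Finset.Icc 1 A.card).filter (fun k => k ≤ (A.filter P).card) =
      Finset.Icc 1 (A.filter P).card := by
    ext k
    have := Finset.card_filter_le A P
    simp only [Finset.mem_filter, Finset.mem_Icc]
    omega
  rw [this]; simp

open Classical in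
lemma measurableSet_le_card {α ι : Type*} [MeasurableSpace α] (A : Finset ι) (E : ι → Set α)
    (hE : ∀ i, MeasurableSet (E i)) (k : ℕ) :
    MeasurableSet {s | k ≤ (A.filter fun i => s ∈ E i).card} := by
  have : Measurable fun s => (A.filter fun i => s ∈ E i).card := by
    simp only [Finset.card_filter]
    exact Finset.measurable_sum _ fun i _ =>
      Measurable.ite (hE i) measurable_const measurable_const
  exact measurableSet_le measurable_const this

open Classical in
lemma sum_measure_eq_lintegral_card {α ι : Type*} [MeasurableSpace α] (μ : Measure α)
    (A : Finset ι) (E : ι → Set α) (hE : ∀ i, MeasurableSet (E i)) :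
    ∑ i ∈ A, μ (E i) = ∫⁻ s, ((A.filter fun i => s ∈ E i).card : ℝ≥0∞) ∂μ := by
  simp only [Finset.card_filter, Nat.cast_sum, Nat.cast_ite, Nat.cast_one, Nat.cast_zero]
  rw [lintegral_finsetSum]
  · refine Finset.sum_congr rfl fun i _ => ?_
    rw [← lintegral_indicator_one (hE i)]
    rfl
  · exact fun i _ => Measurable.ite (hE i) measurable_const measurable_const

open Classical in
/-- The total measure of a finite family of sets, sliced by multiplicity of covering. This replaces
the decreasing rearrangement of `(|f i s|)_i` at each point `s`. -/
lemma sum_measure_eq {α ι : Type*} [MeasurableSpace α] (μ : Measure α) (A : Finset ι)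
    (E : ι → Set α) (hE : ∀ i, MeasurableSet (E i)) :
    ∑ i ∈ A, μ (E i) =
      ∑ k ∈ Finset.Icc 1 A.card, μ {s | k ≤ (A.filter fun i => s ∈ E i).card} := by
  rw [sum_measure_eq_lintegral_card μ A E hE]
  simp only [card_eq_sum_indicator A]
  rw [lintegral_finsetSum]
  · refine Finset.sum_congr rfl fun k _ => ?_
    rw [← lintegral_indicator_one (measurableSet_le_card A E hE k)]
    refine lintegral_congr fun s => ?_
    by_cases h : k ≤ (A.filter fun i => s ∈ E i).card
    · simp [Set.indicator, h]
    · simp [Set.indicator, h]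
  · exact fun k _ => Measurable.ite (measurableSet_le_card A E hE k) measurable_const
      measurable_const

/-! ### Weak-type bound for the Lorentz norm -/

lemma Wp_mono {p a b : ℝ} (hp : 1 < p) (ha : 0 ≤ a) (hab : a ≤ b) (hb : b ≤ 1) :
    Wp p a ≤ Wp p b := by
  unfold Wp
  have hlog : ∀ t : ℝ, 0 < t → t ≤ 1 → 1 ≤ Real.log (Real.exp 1 / t) := by
    intro t h0 h1
    rw [Real.log_div (Real.exp_pos 1).ne' h0.ne', Real.log_exp]
    linarith [Real.log_nonpos h0.le h1]
  rcases ha.eq_or_lt with rfl | ha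
  · rw [if_pos rfl]
    split_ifs with h
    · exact le_rfl
    · exact Real.rpow_nonneg (zero_le_one.trans (hlog b (lt_of_le_of_ne hab (Ne.symm h)) hb)) _
  · have hb0 := ha.trans_le hab
    rw [if_neg ha.ne', if_neg hb0.ne']
    refine Real.rpow_le_rpow_of_nonpos (zero_lt_one.trans_le (hlog b hb0 hb)) ?_ (by linarith)
    refine Real.log_le_log (by positivity) ?_
    gcongr

lemma volume_level_le_one (p lam : ℝ) (F : ℝ → ℝ) :
    volume {s : ℝ | s ∈ Set.Icc (0 : ℝ) 1 ∧ lam < |F s| ^ p} ≤ 1 := by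
  refine (measure_mono fun s hs => hs.1).trans (?_ : volume (Set.Icc (0 : ℝ) 1) ≤ 1)
  simp

/-- The weak-type (Chebyshev) consequence of the Lorentz norm bound, at a single level `L`; it
uses only that the integrand `lam ↦ W_p(μ{|F|^p > lam})` is antitone. -/
lemma mul_Wp_le {p B L : ℝ} (hp : 1 < p) (hB : 0 ≤ B) (hL : 0 < L) (F : ℝ → ℝ)
    (hF : XpNorm p F ≤ ENNReal.ofReal B) :
    L * Wp p (volume {s : ℝ | s ∈ Set.Icc (0 : ℝ) 1 ∧ L < |F s| ^ p}).toReal ≤ B ^ p := by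
  have hp0 : 0 < p := by linarith
  set m : ℝ → ℝ := fun lam =>
    (volume {s : ℝ | s ∈ Set.Icc (0 : ℝ) 1 ∧ lam < |F s| ^ p}).toReal with hm
  have h1 : ∫⁻ lam in Set.Ioi (0 : ℝ), ENNReal.ofReal (Wp p (m lam)) ≤
      ENNReal.ofReal (B ^ p) := by
    unfold XpNorm at hF
    rw [← ENNReal.ofReal_rpow_of_nonneg hB hp0.le]
    have := ENNReal.rpow_le_rpow hF hp0.le
    rwa [← ENNReal.rpow_mul, one_div_mul_cancel hp0.ne', ENNReal.rpow_one] at this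
  have hfin : ∀ l, volume {s : ℝ | s ∈ Set.Icc (0 : ℝ) 1 ∧ l < |F s| ^ p} ≠ ⊤ := fun l =>
    ((volume_level_le_one p l F).trans_lt ENNReal.one_lt_top).ne
  have h2 : ∫⁻ _ in Set.Ioc (0 : ℝ) L, ENNReal.ofReal (Wp p (m L)) ≤
      ∫⁻ lam in Set.Ioi (0 : ℝ), ENNReal.ofReal (Wp p (m lam)) := by
    refine le_trans (setLIntegral_mono' measurableSet_Ioc fun l hl => ?_)
      (lintegral_mono_set (fun x hx => hx.1))
    refine ENNReal.ofReal_le_ofReal (Wp_mono hp ENNReal.toReal_nonneg ?_ ?_)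
    · refine ENNReal.toReal_mono (hfin l) (measure_mono fun s hs => ⟨hs.1, hl.2.trans_lt hs.2⟩)
    · exact ENNReal.toReal_le_of_le_ofReal zero_le_one
        (by simpa using volume_level_le_one p l F)
  have h3 := h2.trans h1
  rw [setLIntegral_const, Real.volume_Ioc, sub_zero, mul_comm, ← ENNReal.ofReal_mul hL.le,
    ENNReal.ofReal_le_ofReal_iff (by positivity)] at h3
  exact h3

/-! ### From harmonic bounds on subfamilies to power sums -/

/-- If every subfamily of `b ≥ 0` has sum at most `K` times the harmonic number of its cardinality,
then `∑ b i ^ s ≤ Z * K ^ s` for `s > 1`, with `Z` depending only on `s`. Comparing the minimum of a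
subfamily of size `N` with its average shows that the minimum is at most `K N ^ (d - 1)` up to a
constant, the harmonic number being `O(N ^ d)`; the elements are then removed one at a time in
increasing order. -/
lemma exists_sum_rpow_bound {s : ℝ} (hs : 1 < s) : ∃ Z : ℝ, 0 < Z ∧
    ∀ {ι : Type} [DecidableEq ι] (K : ℝ) (b : ι → ℝ), 0 ≤ K → (∀ i, 0 ≤ b i) →
      (∀ A : Finset ι, ∑ i ∈ A, b i ≤ K * ∑ k ∈ Finset.Icc 1 A.card, (1 / (k : ℝ))) →
      ∀ A : Finset ι, ∑ i ∈ A, b i ^ s ≤ Z * K ^ s := by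
  -- `d` is small enough that `r = (1 - d) * s` still exceeds `1`.
  set d : ℝ := (1 - 1 / s) / 2 with hd
  have hs0 : 0 < s := by linarith
  have hd0 : 0 < d := by
    have : 1 / s < 1 := by rw [div_lt_one hs0]; exact hs
    rw [hd]; linarith
  set r : ℝ := (1 - d) * s with hr
  have hr1 : 1 < r := by
    have : r = (s + 1) / 2 := by rw [hr, hd]; field_simp; ring
    linarith
  have hsum : Summable fun k : ℕ => 1 / (k : ℝ) ^ r := Real.summable_one_div_nat_rpow.mpr hr1
  have hharm : ∀ N : ℕ, 1 ≤ N →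
      ∑ k ∈ Finset.Icc 1 N, (1 / (k : ℝ)) ≤ (1 + 1 / d) * (N : ℝ) ^ d := by
    intro N hN
    have h1 := harmonic_le_one_add_log N
    have h2 : (harmonic N : ℝ) = ∑ k ∈ Finset.Icc 1 N, (1 / (k : ℝ)) := by
      rw [harmonic_eq_sum_Icc]; push_cast; simp
    have hN' : (1 : ℝ) ≤ N := by exact_mod_cast hN
    have h3 := Real.log_le_rpow_div (x := (N : ℝ)) (by positivity) hd0
    have h4 := Real.one_le_rpow hN' hd0.le
    rw [h2] at h1
    calc _ ≤ _ := h1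
      _ ≤ (N : ℝ) ^ d + (N : ℝ) ^ d / d := by gcongr
      _ = _ := by ring
  refine ⟨(1 + 1 / d) ^ s * (1 + ∑' k : ℕ, 1 / (k : ℝ) ^ r), ?_, ?_⟩
  · have : 0 ≤ ∑' k : ℕ, 1 / (k : ℝ) ^ r := tsum_nonneg fun k => by positivity
    positivity
  intro ι _ K b hK hb hA
  have key : ∀ (N : ℕ) (A : Finset ι), A.card = N →
      ∑ i ∈ A, b i ^ s ≤ ((1 + 1 / d) * K) ^ s * ∑ k ∈ Finset.range (N + 1), 1 / (k : ℝ) ^ r := by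
    intro N
    induction N with
    | zero =>
      intro A hc
      rw [Finset.card_eq_zero] at hc
      subst hc
      rw [Finset.sum_empty]
      exact mul_nonneg (by positivity) (Finset.sum_nonneg fun k _ => by positivity)
    | succ N ih =>
      intro A hc
      have hne : A.Nonempty := by rw [← Finset.card_pos]; omega
      obtain ⟨m, hm, hmin⟩ := Finset.exists_min_image A b hne
      rw [← Finset.add_sum_erase _ _ hm, Finset.sum_range_succ, mul_add, add_comm]
      refine add_le_add (ih _ (by rw [Finset.card_erase_of_mem hm, hc]; rfl)) ?_
      have hN0 : (0 : ℝ) < ((N + 1 : ℕ) : ℝ) := by positivity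
      have h1 : ((N + 1 : ℕ) : ℝ) * b m ≤ K * ((1 + 1 / d) * ((N + 1 : ℕ) : ℝ) ^ d) := by
        calc ((N + 1 : ℕ) : ℝ) * b m = ∑ _i ∈ A, b m := by
              rw [Finset.sum_const, hc, nsmul_eq_mul]
          _ ≤ ∑ i ∈ A, b i := Finset.sum_le_sum hmin
          _ ≤ _ := hA A
          _ ≤ _ := by rw [hc]; gcongr; exact hharm _ (by omega)
      have h2 : b m ≤ ((1 + 1 / d) * K) * ((N + 1 : ℕ) : ℝ) ^ (-(1 - d)) := by
        have h3 : ((N + 1 : ℕ) : ℝ) ^ (-(1 - d)) = ((N + 1 : ℕ) : ℝ) ^ d / ((N + 1 : ℕ) : ℝ) := by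
          rw [neg_sub, Real.rpow_sub hN0, Real.rpow_one]
        rw [h3, ← mul_div_assoc, le_div_iff₀ hN0]
        linarith
      calc b m ^ s ≤ (((1 + 1 / d) * K) * ((N + 1 : ℕ) : ℝ) ^ (-(1 - d))) ^ s :=
            Real.rpow_le_rpow (hb m) h2 hs0.le
        _ = _ := by
            rw [Real.mul_rpow (by positivity) (by positivity), ← Real.rpow_mul hN0.le, neg_mul,
              ← hr, Real.rpow_neg hN0.le, one_div (_ ^ r)]
  intro A
  calc _ ≤ _ := key _ A rfl
    _ ≤ ((1 + 1 / d) * K) ^ s * (1 + ∑' k : ℕ, 1 / (k : ℝ) ^ r) := by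
        gcongr
        have := hsum.sum_le_tsum (Finset.range (A.card + 1)) (fun k _ => by positivity)
        linarith
    _ = _ := by rw [Real.mul_rpow (by positivity) hK]; ring

/-! ### Distribution of the number of large functions -/

/-- The `±1` combination of the values `f i s` with sign `+1` exactly at the indices in `T`. -/
noncomputable def signSum {n : ℕ} (f : Fin n → ℝ → ℝ) (T : Finset (Fin n)) (s : ℝ) : ℝ :=
  ∑ i, (if i ∈ T then (1 : ℝ) else -1) * f i s

lemma measurable_signSum {n : ℕ} {f : Fin n → ℝ → ℝ} (hf : ∀ i, Measurable (f i))
    (T : Finset (Fin n)) : Measurable (signSum f T) :=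
  Finset.measurable_sum _ fun i _ => (hf i).const_mul _

lemma measurableSet_level {p : ℝ} {F : ℝ → ℝ} (hF : Measurable F) (L : ℝ) :
    MeasurableSet {s | L < |F s| ^ p} :=
  measurableSet_lt measurable_const ((continuous_abs.measurable.comp hF).pow_const p)

lemma mu01_level {p : ℝ} {F : ℝ → ℝ} (hF : Measurable F) (L : ℝ) :
    mu01 {s | L < |F s| ^ p} = volume {s : ℝ | s ∈ Set.Icc (0 : ℝ) 1 ∧ L < |F s| ^ p} := by
  rw [mu01, Measure.restrict_apply (measurableSet_level hF L), Set.inter_comm]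
  rfl

lemma mu01_le_one (s : Set ℝ) : mu01 s ≤ 1 := by
  refine (measure_mono (Set.subset_univ s)).trans ?_
  simp [mu01]

/-- At each point where at least `k` of the functions satisfy `|f i s| ^ p > lam`, a proportion
`2 ^ (-k)` of all sign choices makes the signed sum exceed `k * lam ^ (1 / p)`. Averaging over the
signs, one choice achieves this on a `2 ^ (-k)` proportion of the set of such points. -/
lemma exists_signs_measure_ge {n : ℕ} {p : ℝ} (hp : 1 < p) {f : Fin n → ℝ → ℝ}
    (hf : ∀ i, Measurable (f i)) (A : Finset (Fin n)) {k : ℕ} (hk : 1 ≤ k) {lam : ℝ}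
    (hlam : 0 < lam) :
    ∃ T : Finset (Fin n),
      mu01 {s | k ≤ (A.filter fun i => lam < |f i s| ^ p).card} ≤
        2 ^ k * mu01 {s | (k : ℝ) ^ p * lam < |signSum f T s| ^ p} := by
  classical
  have hp0 : 0 < p := by linarith
  set E : Finset (Fin n) → Set ℝ := fun T => {s | (k : ℝ) ^ p * lam < |signSum f T s| ^ p}
  set D : Set ℝ := {s | k ≤ (A.filter fun i => lam < |f i s| ^ p).card}
  have hE : ∀ T, MeasurableSet (E T) := fun T => measurableSet_level (measurable_signSum hf T) _
  have hD : MeasurableSet D := measurableSet_le_card A (fun i => {s | lam < |f i s| ^ p})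
    (fun i => measurableSet_level (hf i) lam) k
  have hpt : ∀ s ∈ D, 2 ^ (n - k) ≤ (Finset.univ.filter fun T => s ∈ E T).card := by
    intro s hs
    obtain ⟨S, hSA, hSk⟩ := Finset.exists_subset_card_eq (show k ≤ _ from hs)
    have hcount := two_pow_le_card_signs (fun i => f i s) S
    rw [hSk] at hcount
    refine hcount.trans (Finset.card_le_card ?_)
    intro T hT
    simp only [Finset.mem_filter, Finset.mem_univ, true_and] at hT ⊢
    have h1 : ∀ i ∈ S, lam ^ (1 / p) < |f i s| := by
      intro i hi
      have := (Finset.mem_filter.mp (hSA hi)).2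
      rwa [← Real.rpow_lt_rpow_iff (by positivity) (abs_nonneg _) hp0, ← Real.rpow_mul hlam.le,
        one_div_mul_cancel hp0.ne', Real.rpow_one]
    have hne : S.Nonempty := by rw [← Finset.card_pos]; omega
    have h2 : (k : ℝ) * lam ^ (1 / p) < |signSum f T s| := by
      refine lt_of_lt_of_le ?_ hT
      have := Finset.sum_lt_sum_of_nonempty hne h1
      rwa [Finset.sum_const, hSk, nsmul_eq_mul] at this
    have h3 := Real.rpow_lt_rpow (by positivity) h2 hp0
    rw [Real.mul_rpow (by positivity) (by positivity), ← Real.rpow_mul hlam.le,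
      one_div_mul_cancel hp0.ne', Real.rpow_one] at h3
    exact h3
  have hsum : (2 : ℝ≥0∞) ^ (n - k) * mu01 D ≤ ∑ T, mu01 (E T) := by
    rw [sum_measure_eq_lintegral_card mu01 Finset.univ E hE, ← setLIntegral_const]
    refine (setLIntegral_mono' hD fun s hs => ?_).trans (setLIntegral_le_lintegral D _)
    exact_mod_cast hpt s hs
  by_contra! hcon
  have h1 : ∑ T, 2 ^ k * mu01 (E T) < ∑ _T : Finset (Fin n), mu01 D :=
    ENNReal.sum_lt_sum_of_nonempty Finset.univ_nonempty fun T _ => hcon T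
  rw [← Finset.mul_sum, Finset.sum_const, Finset.card_univ, Fintype.card_finset, Fintype.card_fin,
    nsmul_eq_mul] at h1
  refine absurd h1 (not_lt.mpr ?_)
  calc ((2 ^ n : ℕ) : ℝ≥0∞) * mu01 D ≤ (2 ^ k * 2 ^ (n - k)) * mu01 D := by
        gcongr
        rw [← pow_add]
        push_cast
        exact pow_le_pow_right₀ (by norm_num) (by omega)
    _ = 2 ^ k * (2 ^ (n - k) * mu01 D) := by ring
    _ ≤ _ := by gcongr

/-- The set where at least `k` of the functions exceed the level `lam` has exponentially small
measure, in terms of `u = k * lam / B ^ p`. If `m` is its measure, the weak-type bound at level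
`k ^ p * lam` for a good choice of signs, with `W_p(2 ^ (-k) * m)` on the left, reads
`k * u ^ (1 / (p - 1)) ≤ 1 + k * log 2 - log m`; together with `m ≤ 1` this gives the claim,
uniformly in `k`. -/
lemma level_measure_le {n : ℕ} {p B : ℝ} (hp : 1 < p) (hB : 0 < B) {f : Fin n → ℝ → ℝ}
    (hf : ∀ i, Measurable (f i)) (hfB : ∀ T, XpNorm p (signSum f T) ≤ ENNReal.ofReal B)
    (A : Finset (Fin n)) {k : ℕ} (hk : 1 ≤ k) {lam : ℝ} (hlam : 0 < lam) :
    mu01 {s | k ≤ (A.filter fun i => lam < |f i s| ^ p).card} ≤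
      ENNReal.ofReal (Real.exp (2 - (k * lam / B ^ p) ^ (1 / (p - 1)))) := by
  obtain ⟨T, hT⟩ := exists_signs_measure_ge hp hf A hk hlam
  set D : Set ℝ := {s | k ≤ (A.filter fun i => lam < |f i s| ^ p).card}
  have hk0 : (0 : ℝ) < k := by exact_mod_cast hk
  have hk1 : (1 : ℝ) ≤ k := by exact_mod_cast hk
  have hp1 : 0 < p - 1 := by linarith
  have hDtop : mu01 D ≠ ⊤ := ((mu01_le_one D).trans_lt ENNReal.one_lt_top).ne
  rw [← ENNReal.ofReal_toReal hDtop]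
  refine ENNReal.ofReal_le_ofReal ?_
  have hm1 : (mu01 D).toReal ≤ 1 := ENNReal.toReal_le_of_le_ofReal zero_le_one
    (by simpa using mu01_le_one D)
  rcases (ENNReal.toReal_nonneg (a := mu01 D)).eq_or_lt with h0 | hm0
  · rw [← h0]; exact (Real.exp_pos _).le
  set m := (mu01 D).toReal
  rw [mu01_level (measurable_signSum hf T)] at hT
  have hw := mul_Wp_le hp hB.le (L := (k : ℝ) ^ p * lam) (by positivity) (signSum f T) (hfB T)
  have htle := volume_level_le_one p ((k : ℝ) ^ p * lam) (signSum f T)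
  set v := volume {s : ℝ | s ∈ Set.Icc (0 : ℝ) 1 ∧ (k : ℝ) ^ p * lam < |signSum f T s| ^ p}
  have hvtop : v ≠ ⊤ := (htle.trans_lt ENNReal.one_lt_top).ne
  have hmt : m ≤ 2 ^ k * v.toReal := by
    have := ENNReal.toReal_mono (ENNReal.mul_ne_top (by finiteness) hvtop) hT
    simpa using this
  set t := v.toReal
  have ht0 : 0 < t := by
    by_contra! h
    nlinarith [pow_pos (two_pos : (0 : ℝ) < 2) k]
  have ht1 : t ≤ 1 := ENNReal.toReal_le_of_le_ofReal zero_le_one (by simpa using htle)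
  rw [Wp, if_neg ht0.ne', Real.log_div (Real.exp_pos 1).ne' ht0.ne', Real.log_exp] at hw
  set u := k * lam / B ^ p with hu
  have hu0 : 0 < u := by positivity
  have hlogm : Real.log m ≤ 0 := Real.log_nonpos hm0.le hm1
  have hlogt : Real.log t ≤ 0 := Real.log_nonpos ht0.le ht1
  have hlogmt : Real.log m ≤ k * Real.log 2 + Real.log t := by
    rw [← Real.log_pow, ← Real.log_mul (by positivity) ht0.ne']
    exact Real.log_le_log hm0 hmt
  -- The bound `hw` raised to the power `1 / (p - 1)`, using `k ^ p * lam / B ^ p = k ^ (p - 1) * u`.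
  have hmain : k * u ^ (1 / (p - 1)) ≤ 1 - Real.log t := by
    have hx : 0 < 1 - Real.log t := by linarith
    have h1 : (k : ℝ) ^ (p - 1) * u ≤ (1 - Real.log t) ^ (p - 1) := by
      have hneg : (1 - Real.log t) ^ (1 - p) = ((1 - Real.log t) ^ (p - 1))⁻¹ := by
        rw [← Real.rpow_neg hx.le, neg_sub]
      have hBp : 0 < B ^ p := Real.rpow_pos_of_pos hB p
      have hkp : (k : ℝ) ^ p = (k : ℝ) ^ (p - 1) * k := by
        rw [Real.rpow_sub_one hk0.ne']; field_simp
      rw [hneg, ← div_eq_mul_inv, div_le_iff₀ (by positivity), hkp] at hw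
      rw [hu, ← mul_div_assoc, div_le_iff₀ hBp]
      linarith
    have h2 := Real.rpow_le_rpow (by positivity) h1 (show 0 ≤ 1 / (p - 1) by positivity)
    rwa [Real.mul_rpow (by positivity) hu0.le, ← Real.rpow_mul hk0.le, ← Real.rpow_mul hx.le,
      mul_one_div_cancel hp1.ne', Real.rpow_one, Real.rpow_one] at h2
  rw [← Real.exp_log hm0, Real.exp_le_exp]
  have hl2 : Real.log 2 ≤ 1 := by linarith [Real.log_two_lt_d9]
  -- For `u ^ (1 / (p - 1)) ≤ 2` the bound `m ≤ 1` suffices; otherwise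
  -- `1 + k * log 2 - k * u ^ (1 / (p - 1)) ≤ k * (2 - u ^ (1 / (p - 1))) ≤ 2 - u ^ (1 / (p - 1))`.
  rcases le_total (u ^ (1 / (p - 1))) 2 with h | h
  · linarith
  · nlinarith [mul_nonneg (sub_nonneg.mpr hk1) (sub_nonneg.mpr h),
      mul_nonneg hk0.le (sub_nonneg.mpr hl2), hlogmt, Real.log_two_lt_d9]

/-! ### Integrating over levels -/

lemma lintegral_level_bound {g c : ℝ} (hg : 0 < g) (hc : 0 < c) :
    ∫⁻ lam in Set.Ioi (0 : ℝ), ENNReal.ofReal (Real.exp (2 - (c * lam) ^ g)) =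
      ENNReal.ofReal (Real.exp 2 * Real.Gamma (1 / g + 1) * c⁻¹) := by
  have hcg : 0 < c ^ g := Real.rpow_pos_of_pos hc g
  have h1 : ∀ lam ∈ Set.Ioi (0 : ℝ), Real.exp (2 - (c * lam) ^ g) =
      Real.exp 2 * Real.exp (-(c ^ g) * lam ^ g) := by
    intro lam hl
    rw [Real.mul_rpow hc.le (le_of_lt hl), ← Real.exp_add, neg_mul, sub_eq_add_neg]
  have hint := integrableOn_rpow_mul_exp_neg_mul_rpow (s := 0) (by norm_num) hg hcg
  simp only [Real.rpow_zero, one_mul] at hint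
  rw [setLIntegral_congr_fun measurableSet_Ioi fun l hl => congrArg ENNReal.ofReal (h1 l hl),
    ← ofReal_integral_eq_lintegral_ofReal (hint.const_mul _) (ae_of_all _ fun x => by positivity),
    integral_const_mul, integral_exp_neg_mul_rpow hg hcg, ← Real.rpow_mul hc.le]
  congr 1
  rw [show g * (-1 / g) = -1 by field_simp, Real.rpow_neg_one]
  ring

/-- For every subfamily `A`, `∑ i ∈ A, ‖f i‖_p ^ p` is at most a constant times `B ^ p` times the
harmonic number of `#A`: by the layer-cake formula and slicing by multiplicity the left-hand side is
the sum over `k ≤ #A` of the integrals in `lam` of `level_measure_le`, each of order `B ^ p / k`. -/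
lemma sum_lintegral_le {n : ℕ} {p B : ℝ} (hp : 1 < p) (hB : 0 < B) {f : Fin n → ℝ → ℝ}
    (hf : ∀ i, Measurable (f i)) (hfB : ∀ T, XpNorm p (signSum f T) ≤ ENNReal.ofReal B)
    (A : Finset (Fin n)) :
    ∑ i ∈ A, ∫⁻ s, ENNReal.ofReal (|f i s| ^ p) ∂mu01 ≤
      ENNReal.ofReal (Real.exp 2 * Real.Gamma p * B ^ p *
        ∑ k ∈ Finset.Icc 1 A.card, (1 / (k : ℝ))) := by
  have hp1 : 0 < p - 1 := by linarith
  have hG : 0 < Real.Gamma p := Real.Gamma_pos_of_pos (by linarith)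
  have hBp : 0 < B ^ p := Real.rpow_pos_of_pos hB p
  have h1 : ∀ i, ∫⁻ s, ENNReal.ofReal (|f i s| ^ p) ∂mu01 =
      ∫⁻ lam in Set.Ioi (0 : ℝ), mu01 {s | lam < |f i s| ^ p} := fun i =>
    lintegral_eq_lintegral_meas_lt mu01 (ae_of_all _ fun s => by positivity)
      ((continuous_abs.measurable.comp (hf i)).pow_const p).aemeasurable
  have hanti : ∀ i, Measurable fun lam : ℝ => mu01 {s | lam < |f i s| ^ p} := fun i =>
    Antitone.measurable fun a b hab => measure_mono fun s hs => lt_of_le_of_lt hab hs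
  have hanti2 : ∀ k : ℕ, Measurable fun lam : ℝ =>
      mu01 {s | k ≤ (A.filter fun i => lam < |f i s| ^ p).card} := fun k =>
    Antitone.measurable fun a b hab => measure_mono fun s hs =>
      le_trans (show k ≤ _ from hs) (Finset.card_le_card
        (Finset.monotone_filter_right _ fun i _ hi => lt_of_le_of_lt hab hi))
  simp only [h1]
  rw [← lintegral_finsetSum _ fun i _ => hanti i]
  have h2 : ∀ lam : ℝ, ∑ i ∈ A, mu01 {s | lam < |f i s| ^ p} =
      ∑ k ∈ Finset.Icc 1 A.card, mu01 {s | k ≤ (A.filter fun i => lam < |f i s| ^ p).card} := by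
    intro lam
    convert sum_measure_eq mu01 A (fun i => {s | lam < |f i s| ^ p})
      (fun i => measurableSet_level (hf i) lam)
    exact Iff.rfl
  simp only [h2]
  rw [lintegral_finsetSum _ fun k _ => hanti2 k, Finset.mul_sum,
    ENNReal.ofReal_sum_of_nonneg fun k _ => by positivity]
  refine Finset.sum_le_sum fun k hk => ?_
  have hk1 : 1 ≤ k := (Finset.mem_Icc.mp hk).1
  have hk0 : (0 : ℝ) < k := by exact_mod_cast hk1
  calc _ ≤ ∫⁻ lam in Set.Ioi (0 : ℝ),
        ENNReal.ofReal (Real.exp (2 - ((k / B ^ p) * lam) ^ (1 / (p - 1)))) := by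
        refine setLIntegral_mono' measurableSet_Ioi fun lam hl => ?_
        rw [div_mul_eq_mul_div]
        exact level_measure_le hp hB hf hfB A hk1 hl
    _ = _ := by
        rw [lintegral_level_bound (by positivity) (by positivity)]
        congr 1
        rw [one_div_one_div, sub_add_cancel, inv_div]
        ring

lemma eLpNorm_rpow_eq {p q : ℝ} (hp : 0 < p) (F : ℝ → ℝ) :
    eLpNorm F (ENNReal.ofReal p) mu01 ^ q =
      (∫⁻ s, ENNReal.ofReal (|F s| ^ p) ∂mu01) ^ (q / p) := by
  rw [eLpNorm_eq_lintegral_rpow_enorm_toReal (by simpa using hp) ENNReal.ofReal_ne_top,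
    ENNReal.toReal_ofReal hp.le, ← ENNReal.rpow_mul, one_div_mul_eq_div]
  congr 1
  refine lintegral_congr fun s => ?_
  rw [← ENNReal.ofReal_rpow_of_nonneg (abs_nonneg _) hp.le, Real.enorm_eq_ofReal_abs]

/-! ### The summing inequality -/

/-- The summing inequality for finite positive `B` bounding the `X_p` norms of all signed sums,
with `K = exp 2 * Γ(p) * B ^ p` in `exists_sum_rpow_bound` applied to `b i = ‖f i‖_p ^ p` and
exponent `q / p`. -/
lemma exists_bound_of_signSum {p q : ℝ} (hp : 1 < p) (hpq : p < q) :
    ∃ C : ℝ, 0 < C ∧ ∀ (n : ℕ) (f : Fin n → ℝ → ℝ) (B : ℝ), 0 < B →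
      (∀ i, Measurable (f i)) → (∀ T, XpNorm p (signSum f T) ≤ ENNReal.ofReal B) →
      (∑ i, eLpNorm (f i) (ENNReal.ofReal p) mu01 ^ q) ^ (1 / q) ≤ ENNReal.ofReal (C * B) := by
  have hp0 : 0 < p := by linarith
  have hq0 : 0 < q := by linarith
  have hs : 1 < q / p := (one_lt_div hp0).mpr hpq
  obtain ⟨Z, hZ, hsum⟩ := exists_sum_rpow_bound hs
  set c : ℝ := Real.exp 2 * Real.Gamma p with hc
  have hc0 : 0 < c := mul_pos (Real.exp_pos 2) (Real.Gamma_pos_of_pos hp0)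
  refine ⟨Z ^ (1 / q) * c ^ (1 / p), by positivity, fun n f B hB hf hfB => ?_⟩
  set I : Fin n → ℝ≥0∞ := fun i => ∫⁻ s, ENNReal.ofReal (|f i s| ^ p) ∂mu01 with hI
  have hA : ∀ A : Finset (Fin n), ∑ i ∈ A, I i ≤
      ENNReal.ofReal (c * B ^ p * ∑ k ∈ Finset.Icc 1 A.card, (1 / (k : ℝ))) :=
    sum_lintegral_le hp hB hf hfB
  have hItop : ∀ i, I i ≠ ⊤ := fun i => by
    have := hA {i}
    rw [Finset.sum_singleton] at this
    exact (this.trans_lt ENNReal.ofReal_lt_top).ne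
  have hbd := hsum (c * B ^ p) (fun i => (I i).toReal) (by positivity)
    (fun i => ENNReal.toReal_nonneg) (fun A => by
      rw [← ENNReal.toReal_sum fun i _ => hItop i]
      refine ENNReal.toReal_le_of_le_ofReal ?_ (hA A)
      exact mul_nonneg (by positivity) (Finset.sum_nonneg fun k _ => by positivity)) Finset.univ
  have h1 : ∑ i, eLpNorm (f i) (ENNReal.ofReal p) mu01 ^ q =
      ENNReal.ofReal (∑ i, (I i).toReal ^ (q / p)) := by
    rw [ENNReal.ofReal_sum_of_nonneg fun i _ => by positivity]
    refine Finset.sum_congr rfl fun i _ => ?_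
    rw [eLpNorm_rpow_eq hp0, ← ENNReal.ofReal_rpow_of_nonneg ENNReal.toReal_nonneg (by positivity),
      ENNReal.ofReal_toReal (hItop i)]
  rw [h1, ENNReal.ofReal_rpow_of_nonneg (Finset.sum_nonneg fun i _ => by positivity)
    (by positivity)]
  refine ENNReal.ofReal_le_ofReal ?_
  calc _ ≤ (Z * (c * B ^ p) ^ (q / p)) ^ (1 / q) :=
        Real.rpow_le_rpow (Finset.sum_nonneg fun i _ => by positivity) hbd (by positivity)
    _ = Z ^ (1 / q) * c ^ (1 / p) * B := by
        rw [Real.mul_rpow hZ.le (by positivity), ← Real.rpow_mul (by positivity),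
          show q / p * (1 / q) = 1 / p by field_simp, Real.mul_rpow hc0.le (by positivity),
          ← Real.rpow_mul hB.le, mul_one_div_cancel hp0.ne', Real.rpow_one, mul_assoc]

/-- Theorem (main): for `1 < p < q < 2`, the inclusion `X_p ⊂ L^p` is
`(q,1)`-absolutely summing. -/
theorem Xp_subset_Lp_q_one_summing (p q : ℝ) (hp : 1 < p) (hpq : p < q) (hq : q < 2) :
    ∃ C : ℝ, 0 < C ∧ ∀ (n : ℕ) (f : Fin n → ℝ → ℝ),
      (∀ i, Measurable (f i)) → (∀ i, XpNorm p (f i) ≠ ⊤) →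
      (∑ i, eLpNorm (f i) (ENNReal.ofReal p) mu01 ^ q) ^ (1 / q) ≤
        ENNReal.ofReal C *
          ⨆ ε : Fin n → ({-1, 1} : Set ℝ),
            XpNorm p (fun s => ∑ i, (ε i : ℝ) * f i s) := by
  obtain ⟨C, hC, hbound⟩ := exists_bound_of_signSum hp hpq
  refine ⟨C, hC, fun n f hf _ => ?_⟩
  set M : ℝ≥0∞ := ⨆ ε : Fin n → ({-1, 1} : Set ℝ), XpNorm p (fun s => ∑ i, (ε i : ℝ) * f i s)
    with hM
  have hT : ∀ T, XpNorm p (signSum f T) ≤ M := by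
    intro T
    have := le_iSup (fun ε : Fin n → ({-1, 1} : Set ℝ) =>
      XpNorm p (fun s => ∑ i, (ε i : ℝ) * f i s))
      (fun i => if i ∈ T then ⟨1, by simp⟩ else ⟨-1, by simp⟩)
    refine le_trans (le_of_eq ?_) this
    congr 1
    funext s
    refine Finset.sum_congr rfl fun i _ => ?_
    by_cases h : i ∈ T <;> simp [h]
  by_cases hMtop : M = ⊤
  · rw [hMtop, ENNReal.mul_top (by simpa using hC)]
    exact le_top
  -- `M` may vanish, so the bound is applied to `M + η / C` for every `η > 0`.
  refine ENNReal.le_of_forall_pos_le_add fun η hη _ => ?_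
  have hη' : (0 : ℝ) < η := hη
  refine (hbound n f (M.toReal + η / C) (by positivity) hf fun T => ?_).trans (le_of_eq ?_)
  · rw [ENNReal.ofReal_add ENNReal.toReal_nonneg (by positivity), ENNReal.ofReal_toReal hMtop]
    exact (hT T).trans le_self_add
  · rw [mul_add, mul_div_cancel₀ _ hC.ne', ENNReal.ofReal_add (by positivity) hη'.le,
      ENNReal.ofReal_mul hC.le, ENNReal.ofReal_toReal hMtop, ENNReal.ofReal_coe_nnreal]
end

section
/- There exists a universal constant γ > 0 such that for every τ > 0, every n ∈ ℕ, and every finite family g_1, …, g_n ∈ L^1[0,1], there exist signs ε_1, …, ε_n ∈ {-1, 1} with γ · K(τ, Σ_{k=1}^n ‖g_k‖_{L^1} r_k; L^1, L^∞) ≤ K(τ, Σ_{k=1}^n ε_k g_k; L^1, L^∞), where r_k are the Rademacher functions. -/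
/-!
The constant `γ = 1/2` works, and the signs are those maximising `K(τ, ∑ ε_k g_k)`.

Write `excess c y = (|y| - c)₊`. Truncation at the level `c` gives
`K(τ, f) ≤ ∫ excess c f + τ c` (`Kfun_le`), and conversely `K(τ, f) < L` forces
`∫ excess (L/τ) f ≤ L` (`lintegral_excess_le`). If `K(τ, ∑ ε_k g_k) < L` for all signs `ε`, put
`c = L/τ`, a level that does not depend on `ε`. It remains to bound the excess of
`∑ ‖g_k‖₁ r_k` by `L`, since then `K(τ, ∑ ‖g_k‖₁ r_k) ≤ L + τ c = 2 L`.

The Rademacher functions are independent symmetric signs (`integral_rademacher`), so this excess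
integrates to the average over `ω ∈ {±1}ⁿ` of `excess c (∫ ∑ ω_k |g_k|)`. By Jensen this is at
most the average of `∫ excess c (∑ ω_k |g_k|)`. For each fixed `t`, multiplying `ω` by the signs of
the `g_k t` permutes `{±1}ⁿ` (`sum_signs_abs`), so `|g_k|` may be replaced by `g_k` in the average,
and each term is then at most `L`.
-/

open MeasureTheory
open scoped ENNReal

/-- The part of `|y|` exceeding the level `c`. -/
noncomputable def excess (c y : ℝ) : ℝ := max (|y| - c) 0

lemma excess_nonneg (c y : ℝ) : 0 ≤ excess c y := le_max_right _ _

lemma continuous_excess (c : ℝ) : Continuous (excess c) := by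
  unfold excess; fun_prop

lemma excess_le_abs {c : ℝ} (hc : 0 ≤ c) (y : ℝ) : excess c y ≤ |y| :=
  max_le (by linarith) (abs_nonneg y)

/-- Truncating `f` at the level `c` is an admissible decomposition for the `K`-functional. -/
lemma Kfun_le (τ : ℝ) (f : ℝ → ℝ) {c : ℝ} (hc : 0 ≤ c) :
    Kfun τ f ≤ ∫⁻ t, ENNReal.ofReal (excess c (f t)) ∂mu01 +
      ENNReal.ofReal τ * ENNReal.ofReal c := by
  unfold Kfun
  refine iInf_le_of_le (fun t => f t - max (-c) (min (f t) c)) ?_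
  refine iInf_le_of_le (fun t => max (-c) (min (f t) c)) ?_
  refine iInf_le_of_le ?_ ?_
  · funext t; simp
  gcongr
  · rw [eLpNorm_one_eq_lintegral_enorm]
    refine lintegral_mono fun t => ?_
    rw [← ofReal_norm, Real.norm_eq_abs]
    refine ENNReal.ofReal_le_ofReal (le_of_eq ?_)
    unfold excess
    grind
  · rw [eLpNorm_exponent_top]
    refine eLpNormEssSup_le_of_ae_bound (Filter.Eventually.of_forall fun t => ?_)
    rw [Real.norm_eq_abs, abs_le]
    exact ⟨le_max_left _ _, max_le (by linarith) (min_le_right _ _)⟩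

/-- If `f = u + v` with `‖u‖₁ + τ ‖v‖_∞ < L`, then `|v| ≤ L / τ` almost everywhere, so `|u|` dominates
the excess of `f` over `L / τ`. The summands `u` and `v` need not be measurable. -/
lemma lintegral_excess_le {τ L : ℝ} (hτ : 0 < τ) {f : ℝ → ℝ}
    (h : Kfun τ f < ENNReal.ofReal L) :
    ∫⁻ t, ENNReal.ofReal (excess (L / τ) (f t)) ∂mu01 ≤ ENNReal.ofReal L := by
  have hL : 0 < L := ENNReal.ofReal_pos.1 (bot_le.trans_lt h)
  unfold Kfun at h
  simp only [iInf_lt_iff] at h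
  obtain ⟨u, v, rfl, h⟩ := h
  have hv : eLpNorm v ⊤ mu01 ≤ ENNReal.ofReal (L / τ) := by
    rw [ENNReal.ofReal_div_of_pos hτ, ENNReal.le_div_iff_mul_le (by simp [hτ]) (by simp), mul_comm]
    exact le_add_self.trans h.le
  refine le_trans ?_ (le_self_add.trans h.le)
  rw [eLpNorm_one_eq_lintegral_enorm]
  refine lintegral_mono_ae ?_
  filter_upwards [ae_le_eLpNormEssSup (f := v) (μ := mu01)] with t ht
  rw [← eLpNorm_exponent_top] at ht
  have h1 := ht.trans hv
  rw [← ofReal_norm, ENNReal.ofReal_le_ofReal_iff (by positivity), Real.norm_eq_abs] at h1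
  rw [← ofReal_norm, Real.norm_eq_abs]
  refine ENNReal.ofReal_le_ofReal (max_le ?_ (abs_nonneg _))
  have := abs_add_le (u t) (v t)
  simp only [Pi.add_apply]
  linarith

lemma measurable_rademacher (k : ℕ) : Measurable (rademacher k) := by
  have hs : Measurable Real.sign := by
    unfold Real.sign
    exact Measurable.ite measurableSet_Iio measurable_const
      (Measurable.ite measurableSet_Ioi measurable_const measurable_const)
  exact hs.comp (by fun_prop)

lemma rademacher_mem (k : ℕ) (t : ℝ) : rademacher k t ∈ Set.Icc (-1 : ℝ) 1 := by
  unfold rademacher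
  rcases Real.sign_apply_eq (Real.sin (2 ^ k * Real.pi * t)) with h | h | h <;> rw [h] <;> norm_num

lemma rademacher_succ (k : ℕ) (t : ℝ) : rademacher (k + 1) t = rademacher k (2 * t) := by
  unfold rademacher
  congr 2
  ring

lemma rademacher_sub_one (k : ℕ) (t : ℝ) : rademacher (k + 1) (t - 1) = rademacher (k + 1) t := by
  unfold rademacher
  congr 1
  rw [← Real.sin_sub_nat_mul_two_pi (2 ^ (k + 1) * Real.pi * t) (2 ^ k)]
  congr 1
  push_cast
  ring

lemma rademacher_one_left {t : ℝ} (ht : t ∈ Set.Ioo (0 : ℝ) (1 / 2)) : rademacher 1 t = 1 := by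
  refine Real.sign_of_pos (Real.sin_pos_of_pos_of_lt_pi ?_ ?_)
  · have := ht.1; positivity
  · have := ht.2; nlinarith [Real.pi_pos]

lemma rademacher_one_right {t : ℝ} (ht : t ∈ Set.Ioo (1 / 2 : ℝ) 1) : rademacher 1 t = -1 := by
  refine Real.sign_of_neg ?_
  rw [← Real.sin_sub_two_pi]
  refine Real.sin_neg_of_neg_of_neg_pi_lt ?_ ?_
  · have := ht.2; nlinarith [Real.pi_pos]
  · have := ht.1; nlinarith [Real.pi_pos]

lemma intervalIntegrable_rademacher {n : ℕ} {F : (Fin n → ℝ) → ℝ} (hF : Continuous F) (a b : ℝ) :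
    IntervalIntegrable (fun t => F fun k => rademacher (k.1 + 1) t) volume a b := by
  obtain ⟨C, hC⟩ := (isCompact_univ_pi fun _ : Fin n =>
    isCompact_Icc (a := (-1 : ℝ)) (b := 1)).exists_bound_of_continuousOn hF.continuousOn
  have hm : Measurable (fun t => F fun k : Fin n => rademacher (k.1 + 1) t) :=
    hF.measurable.comp (measurable_pi_lambda _ fun k => measurable_rademacher _)
  refine (intervalIntegrable_const (c := C)).mono_fun hm.aestronglyMeasurable ?_
  refine Filter.Eventually.of_forall fun t => ?_
  exact (hC _ fun k _ => rademacher_mem _ t).trans (le_abs_self C)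

/-- The first `n` Rademacher functions are independent symmetric signs. The induction splits `[0,1]`
at `1/2`: on either half `r₁` is constant and `r_{k+1}(t) = r_k(2t)`, with `r_k` of period one. -/
lemma integral_rademacher (n : ℕ) : ∀ F : (Fin n → ℝ) → ℝ, Continuous F →
    2 ^ n * ∫ t in (0 : ℝ)..1, F (fun k => rademacher (k.1 + 1) t) =
      ∑ σ : Fin n → ℤˣ, F (fun k => ((σ k : ℤ) : ℝ)) := by
  induction n with
  | zero =>
    intro F _
    have h : ∀ x y : Fin 0 → ℝ, F x = F y := fun x y => congrArg F (Subsingleton.elim x y)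
    simp only [h _ 0]
    simp
  | succ n ih =>
    intro F hF
    have hG : ∀ b : ℝ, Continuous fun x : Fin n → ℝ => F (Fin.cons b x) := fun b =>
      hF.comp (continuous_const.finCons continuous_id)
    have hl : ∫ t in (0 : ℝ)..(1 / 2), F (fun k => rademacher (k.1 + 1) t) =
        2⁻¹ * ∫ t in (0 : ℝ)..1, F (Fin.cons 1 fun k => rademacher (k.1 + 1) t) := by
      have h := intervalIntegral.integral_comp_mul_left (a := 0) (b := 1 / 2)
        (fun t => F (Fin.cons 1 fun k : Fin n => rademacher (k.1 + 1) t)) (two_ne_zero (α := ℝ))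
      norm_num at h
      norm_num
      rw [← h]
      -- `r₁ = 1` only on the open interval: at the endpoints `r₁ = 0`
      refine intervalIntegral.integral_congr_Ioo_of_le (by norm_num) fun t ht => ?_
      refine congrArg F (funext fun k => ?_)
      refine Fin.cases ?_ (fun k => ?_) k
      · simpa using rademacher_one_left (by simpa using ht)
      · simpa using rademacher_succ (k.1 + 1) t
    have hr : ∫ t in (1 / 2 : ℝ)..1, F (fun k => rademacher (k.1 + 1) t) =
        2⁻¹ * ∫ t in (0 : ℝ)..1, F (Fin.cons (-1) fun k => rademacher (k.1 + 1) t) := by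
      have h := intervalIntegral.integral_comp_mul_sub (a := 1 / 2) (b := 1)
        (fun t => F (Fin.cons (-1) fun k : Fin n => rademacher (k.1 + 1) t))
        (two_ne_zero (α := ℝ)) 1
      norm_num at h
      norm_num
      rw [← h]
      refine intervalIntegral.integral_congr_Ioo_of_le (by norm_num) fun t ht => ?_
      refine congrArg F (funext fun k => ?_)
      refine Fin.cases ?_ (fun k => ?_) k
      · simpa using rademacher_one_right (by simpa using ht)
      · simpa [rademacher_sub_one] using rademacher_succ (k.1 + 1) t
    rw [← intervalIntegral.integral_add_adjacent_intervals (b := 1 / 2)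
      (intervalIntegrable_rademacher hF _ _) (intervalIntegrable_rademacher hF _ _), hl, hr,
      ← (Fin.consEquiv fun _ => ℤˣ).sum_comp, Fintype.sum_prod_type, UnitsInt.univ,
      Finset.sum_pair (by decide)]
    have e1 := ih _ (hG 1)
    have e2 := ih _ (hG (-1))
    have key : ∀ (b : ℤˣ) (σ : Fin n → ℤˣ),
        (fun k : Fin (n + 1) => (((Fin.consEquiv fun _ => ℤˣ) (b, σ) k : ℤ) : ℝ)) =
          Fin.cons ((b : ℤ) : ℝ) fun k => ((σ k : ℤ) : ℝ) := by
      intro b σ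
      funext k
      refine Fin.cases ?_ (fun k => ?_) k <;> simp [Fin.consEquiv]
    simp only [key]
    norm_num at e1 e2 ⊢
    rw [← e1, ← e2]
    ring

/-- Jensen's inequality for the convex function `excess c`. -/
lemma excess_integral_le {c : ℝ} {f : ℝ → ℝ} (hf : Integrable f mu01)
    (he : Integrable (fun t => excess c (f t)) mu01) :
    excess c (∫ t, f t ∂mu01) ≤ ∫ t, excess c (f t) ∂mu01 := by
  have : IsProbabilityMeasure mu01 := ⟨by simp [mu01]⟩
  refine max_le ?_ (integral_nonneg fun t => excess_nonneg _ _)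
  have h1 : |∫ t, f t ∂mu01| ≤ ∫ t, |f t| ∂mu01 := abs_integral_le_integral_abs
  have h2 : ∫ t, |f t| ∂mu01 ≤ ∫ t, (excess c (f t) + c) ∂mu01 :=
    integral_mono hf.abs (he.add (integrable_const c)) fun t => by
      have := le_max_left (|f t| - c) 0
      simp only [excess]; linarith
  rw [integral_add he (integrable_const c)] at h2
  simp at h2
  linarith

/-- Multiplying the signs by those of the numbers `a k` permutes the sign patterns. -/
lemma sum_signs_abs {n : ℕ} (F : ℝ → ℝ) (a : Fin n → ℝ) :
    ∑ σ : Fin n → ℤˣ, F (∑ k, ((σ k : ℤ) : ℝ) * |a k|) =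
      ∑ σ : Fin n → ℤˣ, F (∑ k, ((σ k : ℤ) : ℝ) * a k) := by
  refine Fintype.sum_equiv (Equiv.mulRight fun k => if a k < 0 then (-1 : ℤˣ) else 1) _ _
    fun σ => ?_
  congr 1
  refine Finset.sum_congr rfl fun k _ => ?_
  by_cases h : a k < 0
  · simp [h, abs_of_neg]
  · simp [h, abs_of_nonneg (not_lt.1 h)]

/-- If every signed sum of the `g k` has small excess, so does the Rademacher sum. -/
lemma lintegral_excess_rademacher_le {n : ℕ} {g : Fin n → ℝ → ℝ}
    (hg : ∀ k, Integrable (g k) mu01) {c L : ℝ} (hc : 0 ≤ c) (hL : 0 ≤ L)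
    (h : ∀ σ : Fin n → ℤˣ, ∫⁻ t, ENNReal.ofReal (excess c (∑ k, ((σ k : ℤ) : ℝ) * g k t)) ∂mu01 ≤
      ENNReal.ofReal L) :
    ∫⁻ t, ENNReal.ofReal (excess c
      (∑ k, (eLpNorm (g k) 1 mu01).toReal * rademacher (k.1 + 1) t)) ∂mu01 ≤ ENNReal.ofReal L := by
  have hI : ∀ f : ℝ → ℝ, Integrable f mu01 → Integrable (fun t => excess c (f t)) mu01 :=
    fun f hf => hf.abs.mono' ((continuous_excess c).comp_aestronglyMeasurable hf.1)
      (Filter.Eventually.of_forall fun t => by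
        rw [Real.norm_eq_abs, abs_of_nonneg (excess_nonneg _ _)]
        exact excess_le_abs hc _)
  have hs : ∀ σ : Fin n → ℤˣ, Integrable (fun t => ∑ k, ((σ k : ℤ) : ℝ) * g k t) mu01 :=
    fun σ => integrable_finsetSum _ fun k _ => (hg k).const_mul _
  have hs' : ∀ σ : Fin n → ℤˣ, Integrable (fun t => ∑ k, ((σ k : ℤ) : ℝ) * |g k t|) mu01 :=
    fun σ => integrable_finsetSum _ fun k _ => (hg k).abs.const_mul _
  have hnorm : ∀ k, (eLpNorm (g k) 1 mu01).toReal = ∫ t, |g k t| ∂mu01 := fun k => by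
    rw [eLpNorm_one_eq_lintegral_enorm, ← integral_norm_eq_lintegral_enorm (hg k).1]
    simp only [Real.norm_eq_abs]
  set F : (Fin n → ℝ) → ℝ := fun x => excess c (∑ k, (eLpNorm (g k) 1 mu01).toReal * x k) with hF
  have hFc : Continuous F := (continuous_excess c).comp (by fun_prop)
  have h1 : ∀ σ : Fin n → ℤˣ, F (fun k => ((σ k : ℤ) : ℝ)) ≤
      ∫ t, excess c (∑ k, ((σ k : ℤ) : ℝ) * |g k t|) ∂mu01 := fun σ => by
    refine le_of_eq_of_le ?_ (excess_integral_le (hs' σ) (hI _ (hs' σ)))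
    rw [hF, integral_finsetSum _ fun k _ => (hg k).abs.const_mul _]
    simp only [integral_const_mul, hnorm]
    simp only [mul_comm]
  have h2 : ∀ σ : Fin n → ℤˣ, ∫ t, excess c (∑ k, ((σ k : ℤ) : ℝ) * g k t) ∂mu01 ≤ L :=
    fun σ => by
      rw [← ENNReal.ofReal_le_ofReal_iff hL, ofReal_integral_eq_lintegral_ofReal (hI _ (hs σ))
        (Filter.Eventually.of_forall fun t => excess_nonneg _ _)]
      exact h σ
  have h3 : 2 ^ n * ∫ t in (0 : ℝ)..1, F (fun k => rademacher (k.1 + 1) t) ≤ 2 ^ n * L :=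
    calc _ = ∑ σ : Fin n → ℤˣ, F (fun k => ((σ k : ℤ) : ℝ)) := integral_rademacher n F hFc
      _ ≤ ∑ σ : Fin n → ℤˣ, ∫ t, excess c (∑ k, ((σ k : ℤ) : ℝ) * |g k t|) ∂mu01 :=
        Finset.sum_le_sum fun σ _ => h1 σ
      _ = ∑ σ : Fin n → ℤˣ, ∫ t, excess c (∑ k, ((σ k : ℤ) : ℝ) * g k t) ∂mu01 := by
        rw [← integral_finsetSum _ fun σ _ => hI _ (hs' σ),
          ← integral_finsetSum _ fun σ _ => hI _ (hs σ)]
        simp only [sum_signs_abs (excess c)]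
      _ ≤ ∑ σ : Fin n → ℤˣ, L := Finset.sum_le_sum fun σ _ => h2 σ
      _ = 2 ^ n * L := by simp
  have h4 := le_of_mul_le_mul_left h3 (by positivity)
  have h5 := intervalIntegrable_rademacher hFc 0 1
  rw [intervalIntegrable_iff_integrableOn_Icc_of_le zero_le_one] at h5
  rw [intervalIntegral.integral_of_le zero_le_one, ← integral_Icc_eq_integral_Ioc] at h4
  change ∫⁻ t, ENNReal.ofReal (F fun k => rademacher (k.1 + 1) t) ∂mu01 ≤ _
  rw [mu01, ← ofReal_integral_eq_lintegral_ofReal h5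
    (Filter.Eventually.of_forall fun t => excess_nonneg _ _)]
  exact ENNReal.ofReal_le_ofReal h4

/-- Theorem: there is a universal constant `γ > 0` such that for every `τ > 0`,
`n ∈ ℕ` and `g_1, …, g_n ∈ L^1[0,1]`, there are signs `ε_k = ±1` with
`γ K(τ, ∑ ‖g_k‖_1 r_k; L^1, L^∞) ≤ K(τ, ∑ ε_k g_k; L^1, L^∞)`. -/
theorem weak_submajorization_by_rademacher :
    ∃ γ : ℝ, 0 < γ ∧ ∀ τ : ℝ, 0 < τ → ∀ (n : ℕ) (g : Fin n → ℝ → ℝ),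
      (∀ k, Integrable (g k) mu01) →
      ∃ ε : Fin n → ℝ, (∀ k, ε k = 1 ∨ ε k = -1) ∧
        ENNReal.ofReal γ *
            Kfun τ (fun t => ∑ k, (eLpNorm (g k) 1 mu01).toReal * rademacher (k.1 + 1) t) ≤
          Kfun τ (fun t => ∑ k, ε k * g k t) := by
  refine ⟨1 / 2, by norm_num, fun τ hτ n g hg => ?_⟩
  obtain ⟨σ₀, -, hσ₀⟩ := Finset.exists_max_image (Finset.univ : Finset (Fin n → ℤˣ))
    (fun σ => Kfun τ (fun t => ∑ k, ((σ k : ℤ) : ℝ) * g k t)) Finset.univ_nonempty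
  refine ⟨fun k => ((σ₀ k : ℤ) : ℝ), fun k => ?_, ?_⟩
  · rcases Int.units_eq_one_or (σ₀ k) with h | h <;> simp [h]
  refine le_of_forall_gt_imp_ge_of_dense fun b hb => ?_
  rcases eq_or_ne b ⊤ with rfl | hbt
  · exact le_top
  obtain ⟨L, hL, rfl⟩ : ∃ L : ℝ, 0 ≤ L ∧ b = ENNReal.ofReal L :=
    ⟨b.toReal, ENNReal.toReal_nonneg, (ENNReal.ofReal_toReal hbt).symm⟩
  have hc : 0 ≤ L / τ := by positivity
  have h1 := lintegral_excess_rademacher_le hg hc hL fun σ =>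
    lintegral_excess_le hτ ((hσ₀ σ (Finset.mem_univ σ)).trans_lt hb)
  calc _ ≤ ENNReal.ofReal (1 / 2) * (ENNReal.ofReal L + ENNReal.ofReal τ * ENNReal.ofReal (L / τ)) :=
        mul_le_mul_right ((Kfun_le τ _ hc).trans (add_le_add_left h1 _)) _
    _ = ENNReal.ofReal L := by
        rw [← ENNReal.ofReal_mul hτ.le, mul_div_cancel₀ _ hτ.ne', ← ENNReal.ofReal_add hL hL,
          ← ENNReal.ofReal_mul (by norm_num)]
        congr 1
        ring
end
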